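/- Let M ≥ 3 be an integer and let χ ∈ (0, 1] be an algebraic real number. Assume the polynomial Ĥe_{M-2} has M−2 distinct real roots λ̂_1 > ... > λ̂_{M-2} listed in descending order. Define the (M−2)×(M−2) matrix R̂ by R̂_{ij} = Ĥe_{i-1}(λ̂_j)/(i+1)!, and let R̂_+ be its first ⌊M/2⌋−1 columns. Let χ̂(m) = 1 if m is even and χ̂(m) = (2−χ)/χ if m is odd, and set S(k,m) = χ̂(m)·S*(k,m)/√(2π). Define the column vector h ∈ ℝ^{⌊M/2⌋} with entries h_i = (2i−2)!!/√(2π) for i = 1, ..., ⌊M/2⌋ (so h_i = (β₂−1)!!/√(2π) with β₂ = 2i−1), the ⌊M/2⌋×(M−2) matrix S with entries S_{i,j} = S(2i−1, j+1) for i = 1, ..., ⌊M/2⌋ and j = 1, ..., M−2, and the square ⌊M/2⌋×⌊M/2⌋ matrix A = ( h , (S − 2·h·e₁ᵀ)·R̂_+ ), where e₁ = (1,0,...,0)ᵀ ∈ ℝ^{M−2}. Then det A ≠ 0. -/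

import Mathlib

open Polynomial Matrix MeasureTheory Real

/-- Probabilists' Hermite polynomials: He₀ = 1, He₁ = x,
    He_{n+1} = x·He_n − n·He_{n−1}. -/
noncomputable def He : ℕ → Polynomial ℝ
  | 0 => 1
  | 1 => Polynomial.X
  | (n + 2) => Polynomial.X * He (n + 1) - Polynomial.C ((n : ℝ) + 1) * He n

/-- Half-range Hermite integral S*(k,m) = ∫₀^∞ ξ^k He_m(ξ) e^{−ξ²/2} dξ. -/
noncomputable def Sstar (k m : ℕ) : ℝ :=
  ∫ x in Set.Ioi (0 : ℝ), x ^ k * (He m).eval x * Real.exp (-x ^ 2 / 2)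

/-- The accommodation factor χ̂(m): 1 for even m, (2−χ)/χ for odd m. -/
noncomputable def chiHat (χ : ℝ) (m : ℕ) : ℝ :=
  if Even m then 1 else (2 - χ) / χ

/-- S(k,m) = χ̂(m)·S*(k,m)/√(2π). -/
noncomputable def Sχ (χ : ℝ) (k m : ℕ) : ℝ :=
  chiHat χ m * Sstar k m / Real.sqrt (2 * Real.pi)

/-- Modified Hermite-type polynomials: Ĥe₀ = 1, Ĥe₁ = x,
    Ĥe_{k+1} = x·Ĥe_k − (k+2)·Ĥe_{k−1} for k ≥ 1. -/
noncomputable def Hhat : ℕ → Polynomial ℝ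
  | 0 => 1
  | 1 => Polynomial.X
  | (n + 2) => Polynomial.X * Hhat (n + 1) - Polynomial.C ((n : ℝ) + 3) * Hhat n


/-! ### The half-range Gaussian functional -/

lemma integrable_poly_gauss (p : ℝ[X]) :
    Integrable (fun x : ℝ => p.eval x * Real.exp (-x ^ 2 / 2)) := by
  induction p using Polynomial.induction_on' with
  | add p q hp hq =>
    have := hp.add hq
    refine this.congr (Filter.Eventually.of_forall fun x => ?_)
    simp [add_mul]
  | monomial n a =>
    have h := integrable_rpow_mul_exp_neg_mul_sq (b := 1 / 2) (by norm_num) (s := n)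
      (by have : (0 : ℝ) ≤ n := Nat.cast_nonneg n
          linarith)
    refine (h.const_mul a).congr (Filter.Eventually.of_forall fun x => ?_)
    simp only [Polynomial.eval_monomial, Real.rpow_natCast]
    rw [show -(1 / 2 : ℝ) * x ^ 2 = -x ^ 2 / 2 by ring]
    ring

/-- `∫₀^∞ p(x) e^{-x²/2} dx` as a linear functional on polynomials. -/
noncomputable def LL : ℝ[X] →ₗ[ℝ] ℝ where
  toFun p := ∫ x in Set.Ioi (0 : ℝ), p.eval x * Real.exp (-x ^ 2 / 2)
  map_add' p q := by
    rw [← integral_add (integrable_poly_gauss p).integrableOn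
      (integrable_poly_gauss q).integrableOn]
    simp [add_mul]
  map_smul' c p := by
    simp only [RingHom.id_apply, smul_eq_mul]
    rw [← integral_const_mul]
    simp [mul_assoc]

lemma LL_apply (p : ℝ[X]) :
    LL p = ∫ x in Set.Ioi (0 : ℝ), p.eval x * Real.exp (-x ^ 2 / 2) := rfl

lemma LL_C_mul (c : ℝ) (p : ℝ[X]) : LL (C c * p) = c * LL p := by
  rw [← Polynomial.smul_eq_C_mul, map_smul, smul_eq_mul]

lemma hasDerivAt_poly_gauss (p : ℝ[X]) (x : ℝ) :
    HasDerivAt (fun x : ℝ => p.eval x * Real.exp (-x ^ 2 / 2))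
      ((derivative p - X * p).eval x * Real.exp (-x ^ 2 / 2)) x := by
  have h1 := p.hasDerivAt x
  have h2 : HasDerivAt (fun x : ℝ => -x ^ 2 / 2) (-x) x := by
    have := ((hasDerivAt_id x).pow 2).neg.div_const 2
    refine this.congr_deriv ?_
    simp
    ring
  refine (h1.mul h2.exp).congr_deriv ?_
  simp
  ring

lemma LL_deriv (p : ℝ[X]) : LL (derivative p - X * p) = - p.eval 0 := by
  rw [LL_apply]
  have ht : Filter.Tendsto (fun x : ℝ => p.eval x * Real.exp (-x ^ 2 / 2)) Filter.atTop (nhds 0) :=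
    tendsto_zero_of_hasDerivAt_of_integrableOn_Ioi (a := 0)
      (fun x _ => hasDerivAt_poly_gauss p x)
      (integrable_poly_gauss _).integrableOn (integrable_poly_gauss _).integrableOn
  rw [integral_Ioi_of_hasDerivAt_of_tendsto'
    (fun x _ => hasDerivAt_poly_gauss p x) (integrable_poly_gauss _).integrableOn ht]
  simp

lemma LL_one_pos : 0 < LL 1 := by
  have h : LL 1 = √(π / (1 / 2)) / 2 := by
    rw [← integral_gaussian_Ioi, LL_apply]
    congr 1
    ext x
    simp
    ring
  rw [h]
  positivity

lemma LL_X_sq_nonneg (p : ℝ[X]) : 0 ≤ LL (X * (p * p)) := by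
  rw [LL_apply]
  refine setIntegral_nonneg measurableSet_Ioi fun x hx => ?_
  have hx' : (0 : ℝ) < x := hx
  have : 0 ≤ eval x p * eval x p := mul_self_nonneg _
  simp only [eval_mul, eval_X]
  positivity

lemma LL_X_odd (i : ℕ) : LL (X ^ (2 * i + 1)) = (Nat.doubleFactorial (2 * i) : ℝ) := by
  induction i with
  | zero =>
    have := LL_deriv 1
    simp at this
    simpa using this
  | succ i ih =>
    have := LL_deriv (X ^ (2 * i + 2))
    rw [show derivative (X ^ (2 * i + 2) : ℝ[X]) - X * X ^ (2 * i + 2)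
      = C (2 * i + 2 : ℝ) * X ^ (2 * i + 1) - X ^ (2 * (i + 1) + 1) by
        rw [derivative_X_pow]; push_cast; simp; ring, map_sub, LL_C_mul, ih] at this
    simp at this
    rw [show 2 * (i + 1) = 2 * i + 2 by ring, Nat.doubleFactorial_add_two]
    push_cast
    rw [show 2 * (i + 1) + 1 = 2 * i + 2 + 1 by ring] at this
    linarith

lemma Sstar_eq (k m : ℕ) : Sstar k m = LL (X ^ k * He m) := by
  rw [LL_apply, Sstar]
  simp

/-! ### Hermite polynomials -/

lemma He_succ_succ (n : ℕ) : He (n + 2) = X * He (n + 1) - C ((n : ℝ) + 1) * He n := by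
  rw [He]

lemma X_mul_He (n : ℕ) : X * He (n + 1) = He (n + 2) + C ((n : ℝ) + 1) * He n := by
  rw [He_succ_succ]; ring

lemma He_deriv (n : ℕ) : derivative (He (n + 1)) = C ((n : ℝ) + 1) * He n := by
  induction n using Nat.strong_induction_on with
  | _ n ih =>
    match n with
    | 0 => simp [He]
    | 1 =>
      rw [He_succ_succ]
      simp [He, derivative_mul]
      rw [← C_1, ← C_add]
      norm_num
      rw [show (C 2 : ℝ[X]) = 2 from rfl]
      ring
    | n + 2 =>
      rw [He_succ_succ (n + 1), derivative_sub, derivative_mul, derivative_mul, ih (n + 1) (by omega),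
        ih n (by omega), derivative_X, derivative_C, He_succ_succ n]
      push_cast
      simp only [C_add, C_1, show (C 2 : ℝ[X]) = 2 from rfl]
      ring

lemma He_succ_eq (n : ℕ) : He (n + 1) = X * He n - derivative (He n) := by
  cases n with
  | zero => simp [He]
  | succ n => rw [He_deriv, He_succ_succ]

/-- the Hermite differential equation -/
lemma He_ode (n : ℕ) :
    derivative (derivative (He n)) = X * derivative (He n) - C (n : ℝ) * He n := by
  cases n with
  | zero => simp [He]
  | succ n =>
    have h := congrArg derivative (He_succ_eq (n + 1))
    rw [He_deriv (n + 1), derivative_sub, derivative_mul, derivative_X] at h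
    push_cast at h ⊢
    rw [eq_sub_iff_add_eq, ← eq_sub_iff_add_eq'] at h
    have h2 : derivative (derivative (He (n + 1))) =
      1 * He (n + 1) + X * derivative (He (n + 1)) - C ((n : ℝ) + 1 + 1) * He (n + 1) := by
      rw [h]
    rw [h2]
    simp only [C_add, C_1]
    ring

lemma LL_wronskian (i j : ℕ) :
    ((j : ℝ) - i) * LL (He i * He j) =
      (He i).eval 0 * (derivative (He j)).eval 0 - (derivative (He i)).eval 0 * (He j).eval 0 := by
  have h := LL_deriv (derivative (He i) * He j - He i * derivative (He j))
  rw [show derivative (derivative (He i) * He j - He i * derivative (He j))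
      - X * (derivative (He i) * He j - He i * derivative (He j))
      = C ((j : ℝ) - i) * (He i * He j) by
        rw [derivative_sub, derivative_mul, derivative_mul, He_ode, He_ode]
        simp only [C_sub]
        ring, LL_C_mul] at h
  rw [h]
  simp

lemma He_odd_zero (i : ℕ) : (He (2 * i + 1)).eval 0 = 0 := by
  induction i with
  | zero => simp [He]
  | succ i ih =>
    rw [show 2 * (i + 1) + 1 = 2 * i + 1 + 2 by ring, He_succ_succ]
    simp [ih]

lemma He_even_succ (i : ℕ) :
    (He (2 * i + 2)).eval 0 = -(2 * i + 1 : ℝ) * (He (2 * i)).eval 0 := by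
  rw [He_succ_succ]
  simp
  ring

lemma He_even_sign (i : ℕ) : 0 < (-1 : ℝ) ^ i * (He (2 * i)).eval 0 := by
  induction i with
  | zero => simp [He]
  | succ i ih =>
    rw [show 2 * (i + 1) = 2 * i + 2 by ring, He_even_succ, pow_succ]
    have : (0 : ℝ) < 2 * i + 1 := by positivity
    nlinarith [mul_pos this ih]

lemma LL_odd_odd_ne (i j : ℕ) (h : i ≠ j) : LL (He (2 * i + 1) * He (2 * j + 1)) = 0 := by
  have := LL_wronskian (2 * i + 1) (2 * j + 1)
  rw [He_odd_zero, He_odd_zero] at this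
  simp at this
  rcases this with h' | h'
  · exfalso
    apply h
    have : (j : ℝ) = i := by linarith
    exact_mod_cast this.symm
  · exact h'

lemma LL_He_sq (n : ℕ) : LL (He n * He n) = (n.factorial : ℝ) * LL 1 := by
  induction n with
  | zero => simp [He]
  | succ n ih =>
    have h := LL_deriv (He n * He (n + 1))
    rw [show derivative (He n * He (n + 1)) - X * (He n * He (n + 1))
      = C ((n : ℝ) + 1) * (He n * He n) - He (n + 1) * He (n + 1) by
        rw [derivative_mul, He_deriv]
        conv_rhs => rw [He_succ_eq]
        conv_lhs => rw [He_succ_eq]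
        ring, map_sub, LL_C_mul, ih] at h
    have h0 : (He n * He (n + 1)).eval 0 = 0 := by
      rw [eval_mul]
      rcases Nat.even_or_odd' n with ⟨k, rfl | rfl⟩
      · rw [He_odd_zero, mul_zero]
      · rw [He_odd_zero, zero_mul]
    rw [h0] at h
    rw [Nat.factorial_succ]
    push_cast
    linarith

lemma LL_He_odd (i : ℕ) : LL (He (2 * i + 1)) = (He (2 * i)).eval 0 := by
  have h := LL_deriv (He (2 * i))
  rw [show derivative (He (2 * i)) - X * He (2 * i) = - He (2 * i + 1) by
    rw [He_succ_eq]; ring, map_neg] at h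
  linarith

lemma LL_even_odd (i j : ℕ) :
    LL (He (2 * i) * He (2 * j + 1)) =
      (2 * j + 1 : ℝ) * (He (2 * i)).eval 0 * (He (2 * j)).eval 0 / (2 * j + 1 - 2 * i) := by
  have h := LL_wronskian (2 * i) (2 * j + 1)
  rw [He_odd_zero, He_deriv] at h
  have hne : (2 * (j : ℝ) + 1 - 2 * i) ≠ 0 := by
    intro h0
    have : (2 * (j : ℤ) + 1 - 2 * i) = 0 := by exact_mod_cast h0
    omega
  rw [eq_div_iff hne]
  push_cast at h
  simp at h
  linarith

/-- The Gram matrix of the odd Hermite polynomials with the weight `x e^{-x²/2}`. -/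
lemma LL_X_odd_odd (i j : ℕ) :
    LL (X * (He (2 * i + 1) * He (2 * j + 1))) =
      (2 * i + 1) * (2 * j + 1) * (He (2 * i)).eval 0 * (He (2 * j)).eval 0 *
        (2 / (1 - (2 * (j : ℝ) - 2 * i) ^ 2)) := by
  rw [← mul_assoc, X_mul_He, add_mul, map_add, mul_assoc, LL_C_mul,
    show 2 * i + 2 = 2 * (i + 1) by ring, LL_even_odd, LL_even_odd,
    show 2 * (i + 1) = 2 * i + 2 by ring, He_even_succ]
  have h1 : (2 * (j : ℝ) + 1 - 2 * i) ≠ 0 := by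
    intro h0
    have : (2 * (j : ℤ) + 1 - 2 * i) = 0 := by exact_mod_cast h0
    omega
  have h2 : (2 * (j : ℝ) - 1 - 2 * i) ≠ 0 := by
    intro h0
    have : (2 * (j : ℤ) - 1 - 2 * i) = 0 := by exact_mod_cast h0
    omega
  rw [show (1 - (2 * (j : ℝ) - 2 * i) ^ 2) = -((2 * (j : ℝ) + 1 - 2 * i) * (2 * (j : ℝ) - 1 - 2 * i)) by ring]
  push_cast
  rw [show (2 * (j : ℝ) + 1 - 2 * (i + 1)) = (2 * (j : ℝ) - 1 - 2 * i) by ring]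
  field_simp
  ring

lemma LL_X_odd_odd_sign (i j : ℕ) (h : i ≠ j) :
    (-1 : ℝ) ^ i * (-1) ^ j * LL (X * (He (2 * i + 1) * He (2 * j + 1))) ≤ 0 := by
  rw [LL_X_odd_odd]
  have h1 := He_even_sign i
  have h2 := He_even_sign j
  have h3 : (2 / (1 - (2 * (j : ℝ) - 2 * i) ^ 2)) ≤ 0 := by
    apply div_nonpos_of_nonneg_of_nonpos (by norm_num)
    have hz : (1 : ℤ) ≤ ((j : ℤ) - i) ^ 2 := by
      have : (j : ℤ) - i ≠ 0 := by omega
      exact Int.add_one_le_of_lt (sq_pos_of_ne_zero this)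
    have : (1 : ℝ) ≤ ((j : ℝ) - i) ^ 2 := by exact_mod_cast hz
    nlinarith
  have h4 : 0 ≤ (2 * i + 1 : ℝ) * (2 * j + 1) * (((-1 : ℝ) ^ i * (He (2 * i)).eval 0) *
    ((-1 : ℝ) ^ j * (He (2 * j)).eval 0)) := by positivity
  have := mul_nonpos_of_nonneg_of_nonpos h4 h3
  linarith

/-! ### Square roots of diagonally dominant Z-matrices -/

section ZMatrix
variable {ι : Type} [Fintype ι]

/-- The iteration `X ↦ (N + X²)/2` started from zero. -/
noncomputable def sqIter (N : ι → ι → ℝ) : ℕ → ι → ι → ℝ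
  | 0 => fun _ _ => 0
  | n + 1 => fun i j => (N i j + ∑ l, sqIter N n i l * sqIter N n l j) / 2

lemma sqIter_nonneg (N : ι → ι → ℝ) (hN : ∀ i j, 0 ≤ N i j) (n : ℕ) (i j : ι) :
    0 ≤ sqIter N n i j := by
  induction n generalizing i j with
  | zero => simp [sqIter]
  | succ n ih =>
    have : 0 ≤ ∑ l, sqIter N n i l * sqIter N n l j :=
      Finset.sum_nonneg fun l _ => mul_nonneg (ih _ _) (ih _ _)
    have := hN i j
    rw [sqIter]
    linarith

lemma sqIter_mono (N : ι → ι → ℝ) (hN : ∀ i j, 0 ≤ N i j) (n : ℕ) (i j : ι) :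
    sqIter N n i j ≤ sqIter N (n + 1) i j := by
  induction n generalizing i j with
  | zero => exact sqIter_nonneg N hN 1 i j
  | succ n ih =>
    change (N i j + ∑ l, sqIter N n i l * sqIter N n l j) / 2 ≤
      (N i j + ∑ l, sqIter N (n + 1) i l * sqIter N (n + 1) l j) / 2
    have : ∑ l, sqIter N n i l * sqIter N n l j ≤
        ∑ l, sqIter N (n + 1) i l * sqIter N (n + 1) l j :=
      Finset.sum_le_sum fun l _ => mul_le_mul (ih _ _) (ih _ _) (sqIter_nonneg N hN _ _ _)
        (sqIter_nonneg N hN _ _ _)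
    linarith

lemma sqIter_symm (N : ι → ι → ℝ) (hs : ∀ i j, N i j = N j i) (n : ℕ) (i j : ι) :
    sqIter N n i j = sqIter N n j i := by
  induction n generalizing i j with
  | zero => simp [sqIter]
  | succ n ih =>
    change (N i j + ∑ l, sqIter N n i l * sqIter N n l j) / 2 =
      (N j i + ∑ l, sqIter N n j l * sqIter N n l i) / 2
    rw [hs i j]
    congr 2
    refine Finset.sum_congr rfl fun l _ => ?_
    rw [ih i l, ih l j, mul_comm]

lemma sqIter_row (N : ι → ι → ℝ) (hN : ∀ i j, 0 ≤ N i j) (hr : ∀ i, ∑ j, N i j ≤ 1)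
    (n : ℕ) (i : ι) : ∑ j, sqIter N n i j ≤ 1 := by
  induction n generalizing i with
  | zero => simp [sqIter]
  | succ n ih =>
    simp only [sqIter]
    rw [← Finset.sum_div, Finset.sum_add_distrib, Finset.sum_comm]
    have : ∑ l, ∑ j, sqIter N n i l * sqIter N n l j ≤ ∑ l, sqIter N n i l := by
      refine Finset.sum_le_sum fun l _ => ?_
      rw [← Finset.mul_sum]
      exact mul_le_of_le_one_right (sqIter_nonneg N hN _ _ _) (ih l)
    have := ih i
    have := hr i
    linarith

lemma exists_sq (N : ι → ι → ℝ) (hN : ∀ i j, 0 ≤ N i j) (hs : ∀ i j, N i j = N j i)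
    (hr : ∀ i, ∑ j, N i j < 1) :
    ∃ Z : ι → ι → ℝ, (∀ i j, 0 ≤ Z i j) ∧ (∀ i j, Z i j = Z j i) ∧ (∀ i, ∑ j, Z i j < 1) ∧
      ∀ i j, 2 * Z i j = N i j + ∑ l, Z i l * Z l j := by
  have hr' : ∀ i, ∑ j, N i j ≤ 1 := fun i => (hr i).le
  have hlim : ∀ i j, ∃ z, Filter.Tendsto (fun n => sqIter N n i j) Filter.atTop (nhds z) := by
    intro i j
    refine ⟨_, tendsto_atTop_ciSup (monotone_nat_of_le_succ fun n => sqIter_mono N hN n i j)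
      ⟨1, ?_⟩⟩
    rintro _ ⟨n, rfl⟩
    exact (Finset.single_le_sum (f := fun j => sqIter N n i j)
      (fun j _ => sqIter_nonneg N hN n i j) (Finset.mem_univ j)).trans (sqIter_row N hN hr' n i)
  choose Z hZ using hlim
  have hZ0 : ∀ i j, 0 ≤ Z i j := fun i j =>
    ge_of_tendsto' (hZ i j) fun n => sqIter_nonneg N hN n i j
  have hZr : ∀ i, ∑ j, Z i j ≤ 1 := fun i =>
    le_of_tendsto' (tendsto_finsetSum _ fun j _ => hZ i j) fun n => sqIter_row N hN hr' n i
  have hZe : ∀ i j, 2 * Z i j = N i j + ∑ l, Z i l * Z l j := by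
    intro i j
    have h1 := (hZ i j).comp (Filter.tendsto_add_atTop_nat 1)
    have h2 : Filter.Tendsto (fun n => (N i j + ∑ l, sqIter N n i l * sqIter N n l j) / 2)
        Filter.atTop (nhds ((N i j + ∑ l, Z i l * Z l j) / 2)) :=
      ((tendsto_finsetSum _ fun l _ => (hZ i l).mul (hZ l j)).const_add _).div_const _
    have := tendsto_nhds_unique h1 h2
    linarith
  refine ⟨Z, hZ0, fun i j => ?_, fun i => ?_, hZe⟩
  · refine tendsto_nhds_unique (hZ i j) ((hZ j i).congr fun n => sqIter_symm N hs n j i)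
  · have h : 2 * ∑ j, Z i j = ∑ j, N i j + ∑ l, ∑ j, Z i l * Z l j := by
      rw [Finset.mul_sum, Finset.sum_comm, ← Finset.sum_add_distrib]
      exact Finset.sum_congr rfl fun j _ => hZe i j
    have h2 : ∑ l, ∑ j, Z i l * Z l j ≤ ∑ l, Z i l := by
      refine Finset.sum_le_sum fun l _ => ?_
      rw [← Finset.mul_sum]
      exact mul_le_of_le_one_right (hZ0 _ _) (hZr l)
    have := hr i
    linarith

/-- A symmetric nonnegative matrix with row sums `< 1` is strictly smaller than the identity. -/
lemma form_pos (Z : ι → ι → ℝ) (h0 : ∀ i j, 0 ≤ Z i j) (hs : ∀ i j, Z i j = Z j i)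
    (hr : ∀ i, ∑ j, Z i j < 1) (x : ι → ℝ) (hx : x ≠ 0) :
    0 < ∑ i, x i * (x i - ∑ j, Z i j * x j) := by
  have key : ∑ i, x i * (x i - ∑ j, Z i j * x j) ≥ ∑ i, (1 - ∑ j, Z i j) * x i ^ 2 := by
    have e1 : ∑ i, x i * (x i - ∑ j, Z i j * x j) - ∑ i, (1 - ∑ j, Z i j) * x i ^ 2
        = ∑ i, ∑ j, Z i j * (x i ^ 2 - x i * x j) := by
      rw [← Finset.sum_sub_distrib]
      refine Finset.sum_congr rfl fun i _ => ?_
      simp only [mul_sub, Finset.sum_sub_distrib, ← Finset.sum_mul]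
      rw [show ∑ j, Z i j * (x i * x j) = x i * ∑ j, Z i j * x j by
        rw [Finset.mul_sum]; exact Finset.sum_congr rfl fun j _ => by ring]
      ring
    have e2 : ∑ i, ∑ j, Z i j * (x i ^ 2 - x i * x j) =
        ∑ i, ∑ j, Z i j * (x j ^ 2 - x i * x j) := by
      rw [Finset.sum_comm]
      refine Finset.sum_congr rfl fun i _ => Finset.sum_congr rfl fun j _ => ?_
      rw [hs j i]; ring
    have e3 : 0 ≤ ∑ i, ∑ j, Z i j * (x i ^ 2 - x i * x j) +
        ∑ i, ∑ j, Z i j * (x j ^ 2 - x i * x j) := by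
      rw [← Finset.sum_add_distrib]
      refine Finset.sum_nonneg fun i _ => ?_
      rw [← Finset.sum_add_distrib]
      refine Finset.sum_nonneg fun j _ => ?_
      have := mul_nonneg (h0 i j) (sq_nonneg (x i - x j))
      nlinarith
    linarith
  refine lt_of_lt_of_le ?_ key
  obtain ⟨i, hi⟩ := Function.ne_iff.mp hx
  refine Finset.sum_pos' (fun j _ => mul_nonneg (by have := hr j; linarith) (sq_nonneg _))
    ⟨i, Finset.mem_univ i, mul_pos (by have := hr i; linarith) ?_⟩
  have : x i ≠ 0 := hi
  positivity

/-- Eigenvectors of `N` for `1 - μ²` are eigenvectors of `I - Z` for `μ`. -/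
lemma sq_eigen (N Z : ι → ι → ℝ) (h0 : ∀ i j, 0 ≤ Z i j) (hs : ∀ i j, Z i j = Z j i)
    (hr : ∀ i, ∑ j, Z i j < 1) (he : ∀ i j, 2 * Z i j = N i j + ∑ l, Z i l * Z l j)
    (e : ι → ℝ) (μ : ℝ) (hμ : 0 < μ) (hN : ∀ i, ∑ j, N i j * e j = (1 - μ ^ 2) * e i) (i : ι) :
    e i - ∑ j, Z i j * e j = μ * e i := by
  set d : ι → ℝ := fun i => e i - ∑ j, Z i j * e j - μ * e i with hd
  have hd0 : d = 0 := by
    by_contra hne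
    have hp := form_pos Z h0 hs hr d hne
    have hkey : ∀ i, d i - ∑ j, Z i j * d j = - μ * d i := by
      intro i
      have h1 : 2 * ∑ j, Z i j * e j = (1 - μ ^ 2) * e i + ∑ l, Z i l * ∑ j, Z l j * e j := by
        rw [← hN i]
        simp only [Finset.mul_sum]
        rw [Finset.sum_comm, ← Finset.sum_add_distrib]
        refine Finset.sum_congr rfl fun j _ => ?_
        rw [← mul_assoc, he i j, add_mul, Finset.sum_mul]
        congr 1
        exact Finset.sum_congr rfl fun l _ => by ring
      have h2 : ∑ j, Z i j * d j = (1 - μ) * ∑ j, Z i j * e j -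
          ∑ l, Z i l * ∑ j, Z l j * e j := by
        rw [Finset.mul_sum, ← Finset.sum_sub_distrib]
        refine Finset.sum_congr rfl fun j _ => ?_
        simp only [hd]
        ring
      rw [h2]
      simp only [hd]
      linarith
    have : ∑ i, d i * (d i - ∑ j, Z i j * d j) = - μ * ∑ i, d i ^ 2 := by
      rw [Finset.mul_sum]
      refine Finset.sum_congr rfl fun i _ => ?_
      rw [hkey]; ring
    rw [this] at hp
    have : 0 ≤ ∑ i, d i ^ 2 := Finset.sum_nonneg fun i _ => sq_nonneg _
    nlinarith
  have := congrFun hd0 i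
  simp only [hd, Pi.zero_apply] at this
  linarith

lemma M_matrix_nonneg (B : ι → ι → ℝ) (hoff : ∀ i j, i ≠ j → B i j ≤ 0)
    (hpos : ∀ x : ι → ℝ, x ≠ 0 → 0 < ∑ i, x i * ∑ j, B i j * x j)
    (x : ι → ℝ) (hx : ∀ i, 0 ≤ ∑ j, B i j * x j) : ∀ i, 0 ≤ x i := by
  set y : ι → ℝ := fun i => max (-x i) 0 with hy
  have hy0 : y = 0 := by
    by_contra hne
    have h1 := hpos y hne
    have h2 : 0 ≤ ∑ i, y i * ∑ j, B i j * x j :=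
      Finset.sum_nonneg fun i _ => mul_nonneg (le_max_right _ _) (hx i)
    have h3 : ∑ i, y i * ∑ j, B i j * x j + ∑ i, y i * ∑ j, B i j * y j ≤ 0 := by
      rw [← Finset.sum_add_distrib]
      refine Finset.sum_nonpos fun i _ => ?_
      rw [← mul_add, ← Finset.sum_add_distrib, Finset.mul_sum]
      refine Finset.sum_nonpos fun j _ => ?_
      have hyi : 0 ≤ y i := le_max_right _ _
      have hxy : 0 ≤ x j + y j := by
        have : -x j ≤ y j := le_max_left _ _
        linarith
      by_cases hij : i = j
      · subst hij
        have : y i * (x i + y i) = 0 := by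
          simp only [hy]
          rcases le_total (-x i) 0 with h | h
          · rw [max_eq_right h]; ring
          · rw [max_eq_left h]; ring
        rw [show y i * (B i i * x i + B i i * y i) = B i i * (y i * (x i + y i)) by ring, this]
        simp
      · rw [← mul_add, ← mul_assoc, mul_comm (y i), mul_assoc]
        exact mul_nonpos_of_nonpos_of_nonneg (hoff i j hij) (mul_nonneg hyi hxy)
    linarith
  intro i
  have h1 := congrFun hy0 i
  have : -x i ≤ y i := le_max_left _ _
  rw [h1] at this
  simp at this
  exact this

lemma M_matrix_key (B : ι → ι → ℝ) (hoff : ∀ i j, i ≠ j → B i j ≤ 0)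
    (hpos : ∀ x : ι → ℝ, x ≠ 0 → 0 < ∑ i, x i * ∑ j, B i j * x j)
    (x : ι → ℝ) (a : ℝ) (p r : ι → ℝ) (hp : ∀ i, 0 ≤ p i) (hr : ∀ i, 0 ≤ r i)
    (h1 : ∀ i, ∑ j, B i j * x j = a * p i) (h2 : a + ∑ i, r i * x i = 0) :
    a = 0 ∧ x = 0 := by
  have ha : a = 0 := by
    rcases lt_trichotomy a 0 with h | h | h
    · exfalso
      have hx := M_matrix_nonneg B hoff hpos (fun i => - x i) (fun i => by
        simp only [mul_neg, Finset.sum_neg_distrib]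
        rw [h1 i]
        have := mul_nonneg (neg_nonneg.mpr h.le) (hp i)
        linarith)
      have : ∑ i, r i * x i ≤ 0 := Finset.sum_nonpos fun i _ =>
        mul_nonpos_of_nonneg_of_nonpos (hr i) (by have := hx i; linarith)
      linarith
    · exact h
    · exfalso
      have hx := M_matrix_nonneg B hoff hpos x (fun i => by
        rw [h1 i]
        exact mul_nonneg h.le (hp i))
      have : 0 ≤ ∑ i, r i * x i := Finset.sum_nonneg fun i _ => mul_nonneg (hr i) (hx i)
      linarith
  refine ⟨ha, ?_⟩
  by_contra hx
  have := hpos x hx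
  simp [h1, ha] at this

/-- Orthogonality of eigenvectors of a symmetric matrix. -/
lemma eig_orth (A : ι → ι → ℝ) (hs : ∀ i j, A i j = A j i) (e f : ι → ℝ) (μ ν : ℝ) (hne : μ ≠ ν)
    (he : ∀ i, ∑ j, A i j * e j = μ * e i) (hf : ∀ i, ∑ j, A i j * f j = ν * f i) :
    ∑ i, e i * f i = 0 := by
  have h1 : ∑ i, f i * ∑ j, A i j * e j = ∑ i, e i * ∑ j, A i j * f j := by
    simp only [Finset.mul_sum]
    rw [Finset.sum_comm]
    refine Finset.sum_congr rfl fun i _ => Finset.sum_congr rfl fun j _ => ?_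
    rw [hs j i]; ring
  simp only [he, hf] at h1
  have h2 : (μ - ν) * ∑ i, e i * f i = 0 := by
    have e1 : ∑ i, f i * (μ * e i) = μ * ∑ i, e i * f i := by
      rw [Finset.mul_sum]; exact Finset.sum_congr rfl fun i _ => by ring
    have e2 : ∑ i, e i * (ν * f i) = ν * ∑ i, e i * f i := by
      rw [Finset.mul_sum]; exact Finset.sum_congr rfl fun i _ => by ring
    linarith
  rcases mul_eq_zero.mp h2 with h | h
  · exact absurd (sub_eq_zero.mp h) hne
  · exact h

end ZMatrix

/-! ### The tridiagonal matrix of the squared truncated multiplication operator -/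

/-- off-diagonal entries -/
noncomputable def off (i : ℕ) : ℝ := √((2 * i + 4) * (2 * i + 5))

/-- tridiagonal matrix -/
noncomputable def tri (d : ℕ → ℝ) (i j : ℕ) : ℝ :=
  (if j = i then d i else 0) - (if j = i + 1 then off i else 0) - (if i = j + 1 then off j else 0)

lemma tri_symm (d : ℕ → ℝ) (i j : ℕ) : tri d i j = tri d j i := by
  unfold tri
  by_cases h : i = j
  · subst h; rfl
  · rw [if_neg h, if_neg (Ne.symm h)]; ring

lemma off_nonneg (i : ℕ) : 0 ≤ off i := Real.sqrt_nonneg _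

lemma off_sq (i : ℕ) : off i * off i = (2 * i + 4) * (2 * i + 5) := by
  unfold off
  rw [Real.mul_self_sqrt (by positivity)]

lemma off_lt (i : ℕ) : off i < 2 * i + 9 / 2 := by
  unfold off
  rw [Real.sqrt_lt' (by positivity)]
  nlinarith

lemma tri_sum (d E : ℕ → ℝ) (K i : ℕ) (hi : i < K) :
    ∑ j : Fin K, tri d i j * E j = d i * E i - (if i + 1 < K then off i * E (i + 1) else 0) -
      (if i = 0 then 0 else off (i - 1) * E (i - 1)) := by
  rw [Fin.sum_univ_eq_sum_range (fun j => tri d i j * E j) K]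
  simp only [tri, sub_mul, Finset.sum_sub_distrib, ite_mul, zero_mul]
  rw [Finset.sum_ite_eq', Finset.sum_ite_eq']
  simp only [Finset.mem_range, hi, if_true]
  congr 1
  rcases i with _ | i
  · simp
  · have : ∀ j, (i + 1 = j + 1) ↔ (j = i) := by intro j; omega
    simp only [this]
    rw [Finset.sum_ite_eq']
    simp [show i < K by omega]

/-- normalised odd components of the eigenvectors -/
noncomputable def Evec (l : ℝ) (i : ℕ) : ℝ :=
  (-1) ^ i * (Hhat (2 * i + 1)).eval l / √((2 * i + 3).factorial)

lemma Hhat_rec (n : ℕ) (l : ℝ) :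
    (Hhat (n + 2)).eval l = l * (Hhat (n + 1)).eval l - (n + 3) * (Hhat n).eval l := by
  rw [Hhat]; simp

lemma sqrt_fact (i : ℕ) : √((2 * (i + 1) + 3).factorial : ℝ) = off i * √((2 * i + 3).factorial) := by
  unfold off
  rw [← Real.sqrt_mul (by positivity)]
  congr 1
  rw [show 2 * (i + 1) + 3 = (2 * i + 3 + 1) + 1 by ring, Nat.factorial_succ, Nat.factorial_succ]
  push_cast
  ring

lemma off_pos (i : ℕ) : 0 < off i := by unfold off; positivity

lemma Evec_rec (l : ℝ) (i : ℕ) :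
    (4 * i + 7) * Evec l i - off i * Evec l (i + 1) -
      (if i = 0 then 0 else off (i - 1) * Evec l (i - 1)) = l ^ 2 * Evec l i := by
  have hf : √((2 * i + 3).factorial : ℝ) ≠ 0 := by positivity
  have h1 : off i * Evec l (i + 1) =
      - ((-1) ^ i * (Hhat (2 * i + 3)).eval l / √((2 * i + 3).factorial)) := by
    have := (off_pos i).ne'
    unfold Evec
    rw [sqrt_fact, show 2 * (i + 1) + 1 = 2 * i + 3 by ring, pow_succ]
    field_simp
  have h2 : (Hhat (2 * i + 3)).eval l = l * (Hhat (2 * i + 2)).eval l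
      - (2 * i + 4) * (Hhat (2 * i + 1)).eval l := by
    have := Hhat_rec (2 * i + 1) l
    push_cast at this
    rw [this]; ring
  have h3 : (Hhat (2 * i + 2)).eval l = l * (Hhat (2 * i + 1)).eval l
      - (2 * i + 3) * (Hhat (2 * i)).eval l := by
    have := Hhat_rec (2 * i) l
    push_cast at this
    rw [this]
  rw [h1, h2, h3]
  rcases i with _ | i
  · simp only [if_true, Evec]
    simp [Hhat]
    ring
  · rw [if_neg (by omega), show i + 1 - 1 = i by omega]
    have h4 : off i * Evec l i = off i * off i * ((-1) ^ i * (Hhat (2 * i + 1)).eval l) /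
        √((2 * (i + 1) + 3).factorial) := by
      have := (off_pos i).ne'
      rw [sqrt_fact]
      unfold Evec
      field_simp
    have h5 : l * (Hhat (2 * (i + 1))).eval l = (Hhat (2 * (i + 1) + 1)).eval l +
        (2 * i + 4) * (Hhat (2 * i + 1)).eval l := by
      have := Hhat_rec (2 * i + 1) l
      push_cast at this
      rw [show 2 * (i + 1) + 1 = 2 * i + 1 + 2 by ring, this,
        show 2 * (i + 1) = 2 * i + 1 + 1 by ring]
      ring
    rw [h4, off_sq]
    simp only [Evec]
    have e : ∀ a b c d : ℝ, a * (b / d) - c / d = (a * b - c) / d := by intros; ring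
    field_simp
    push_cast
    rw [pow_succ]
    linear_combination ((-1) ^ i * (2 * (i : ℝ) + 5)) * h5

lemma tri_eig_odd (K : ℕ) (l : ℝ) (hl : (Hhat (2 * K + 1)).eval l = 0) (i : ℕ) (hi : i < K) :
    ∑ j : Fin K, tri (fun i => 4 * i + 7) i j * Evec l j = l ^ 2 * Evec l i := by
  rw [tri_sum _ _ _ _ hi, ← Evec_rec l i]
  congr 2
  split_ifs with h
  · rfl
  · have : i + 1 = K := by omega
    rw [this]
    simp [Evec, hl]

lemma tri_eig_even (K : ℕ) (l : ℝ) (hl : (Hhat (2 * K)).eval l = 0) (i : ℕ) (hi : i < K) :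
    ∑ j : Fin K, tri (fun i => if i + 1 < K then 4 * i + 7 else 2 * i + 3) i j * Evec l j
      = l ^ 2 * Evec l i := by
  rw [tri_sum _ _ _ _ hi, ← Evec_rec l i]
  congr 1
  by_cases h : i + 1 < K
  · simp [h]
  · simp only [h, if_false]
    have hK : K = i + 1 := by omega
    have h2 : (Hhat (2 * (i + 1) + 1)).eval l = - (2 * i + 4) * (Hhat (2 * i + 1)).eval l := by
      have := Hhat_rec (2 * i + 1) l
      rw [show 2 * i + 1 + 1 = 2 * K by omega, hl] at this
      push_cast at this
      rw [show 2 * (i + 1) + 1 = 2 * i + 1 + 2 by ring, this]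
      ring
    have h1 : off i * Evec l (i + 1) = (2 * i + 4) * Evec l i := by
      have := (off_pos i).ne'
      unfold Evec
      rw [sqrt_fact, h2, pow_succ]
      field_simp
    rw [h1]
    ring

lemma Evec_zero (l : ℝ) : Evec l 0 = l / √6 := by
  simp [Evec, Hhat, Nat.factorial]

/-- orthogonality of the odd components -/
lemma Evec_orth (K : ℕ) (l m : ℝ) (hl0 : 0 < l) (hm0 : 0 < m) (hne : l ≠ m)
    (h : ((Hhat (2 * K + 1)).eval l = 0 ∧ (Hhat (2 * K + 1)).eval m = 0) ∨
      ((Hhat (2 * K)).eval l = 0 ∧ (Hhat (2 * K)).eval m = 0)) :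
    ∑ i : Fin K, Evec l i * Evec m i = 0 := by
  have hsq : l ^ 2 ≠ m ^ 2 := by
    intro h
    exact hne ((sq_eq_sq₀ hl0.le hm0.le).mp h)
  rcases h with ⟨h1, h2⟩ | ⟨h1, h2⟩
  · exact eig_orth (fun i j : Fin K => tri (fun i => 4 * i + 7) i j) (fun i j => tri_symm _ _ _)
      (fun i => Evec l i) (fun i => Evec m i) _ _ hsq
      (fun i => tri_eig_odd K l h1 i i.2) (fun i => tri_eig_odd K m h2 i i.2)
  · exact eig_orth (fun i j : Fin K => tri (fun i => if i + 1 < K then 4 * i + 7 else 2 * i + 3) i j)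
      (fun i j => tri_symm _ _ _)
      (fun i => Evec l i) (fun i => Evec m i) _ _ hsq
      (fun i => tri_eig_even K l h1 i i.2) (fun i => tri_eig_even K m h2 i i.2)

lemma Evec_norm_pos (K : ℕ) (hK : 0 < K) (l : ℝ) (hl0 : 0 < l) :
    0 < ∑ i : Fin K, Evec l i * Evec l i := by
  refine Finset.sum_pos' (fun i _ => mul_self_nonneg _) ⟨⟨0, hK⟩, Finset.mem_univ _, ?_⟩
  simp only [Evec_zero]
  positivity

/-- existence of the square root of the tridiagonal matrix -/
lemma exists_root (K : ℕ) : ∃ Y : Fin K → Fin K → ℝ,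
    (∀ i j, i ≠ j → Y i j ≤ 0) ∧
    (∀ x : Fin K → ℝ, x ≠ 0 → 0 < ∑ i, x i * ∑ j, Y i j * x j) ∧
    (∀ l : ℝ, 0 < l → (Hhat (2 * K + 1)).eval l = 0 →
      ∀ i, ∑ j, Y i j * Evec l j = l * Evec l i) := by
  set ρ : ℝ := 4 * K + 7 with hρ
  have hρ0 : 0 < ρ := by positivity
  set N : Fin K → Fin K → ℝ := fun i j => (if j = i then 1 else 0) -
    tri (fun i => 4 * i + 7) i j / ρ with hN
  have hsum : ∀ (E : ℕ → ℝ) (i : Fin K), ∑ j, N i j * E j = E i -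
      (∑ j : Fin K, tri (fun i => 4 * i + 7) i j * E j) / ρ := by
    intro E i
    simp only [hN, sub_mul, Finset.sum_sub_distrib, ite_mul, zero_mul, one_mul]
    rw [Finset.sum_ite_eq', if_pos (Finset.mem_univ _), Finset.sum_div]
    congr 1
    exact Finset.sum_congr rfl fun j _ => by ring
  obtain ⟨Z, hZ0, hZs, hZr, hZe⟩ := exists_sq N
    (by
      intro i j
      simp only [hN, tri]
      by_cases h : j = i
      · subst h
        have : (j : ℝ) ≤ K := by exact_mod_cast j.2.le
        simp only [if_true]
        rw [if_neg (by omega)]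
        rw [sub_zero, sub_zero, sub_nonneg, div_le_one hρ0]
        linarith
      · have h' : (j : ℕ) ≠ i := fun h'' => h (Fin.ext h'')
        rw [if_neg h, if_neg h']
        have h1 : 0 ≤ (if (j : ℕ) = i + 1 then off i else 0) := by
          split_ifs
          · exact off_nonneg _
          · exact le_rfl
        have h2 : 0 ≤ (if (i : ℕ) = j + 1 then off j else 0) := by
          split_ifs
          · exact off_nonneg _
          · exact le_rfl
        have := div_nonneg (add_nonneg h1 h2) hρ0.le
        have e : ∀ a b : ℝ, 0 - (0 - a - b) / ρ = (a + b) / ρ := by intros; ring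
        rw [e]
        exact this)
    (by
      intro i j
      simp only [hN]
      rw [tri_symm]
      simp only [eq_comm])
    (by
      intro i
      have := hsum (fun _ => 1) i
      have e : ∑ j, N i j = ∑ j, N i j * 1 := by simp only [mul_one]
      rw [e, this, tri_sum _ (fun _ => 1) K i i.2, sub_lt_self_iff]
      refine div_pos ?_ hρ0
      have h1 : (if (i : ℕ) + 1 < K then off i * 1 else 0) < 2 * (i : ℕ) + 9 / 2 := by
        split_ifs
        · rw [mul_one]; exact off_lt i
        · positivity
      have h2 : (if (i : ℕ) = 0 then 0 else off (i - 1) * 1) < 2 * ((i : ℕ) : ℝ) + 5 / 2 := by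
        split_ifs with h
        · positivity
        · obtain ⟨t, ht⟩ := Nat.exists_eq_succ_of_ne_zero h
          have := off_lt t
          rw [ht, Nat.succ_eq_add_one, Nat.add_sub_cancel]
          push_cast
          linarith
      linarith)
  refine ⟨fun i j => √ρ * ((if j = i then 1 else 0) - Z i j), ?_, ?_, ?_⟩
  · intro i j h
    simp only [if_neg (Ne.symm h)]
    have := mul_nonneg (Real.sqrt_nonneg ρ) (hZ0 i j)
    linarith
  · intro x hx
    have h := mul_pos (Real.sqrt_pos.mpr hρ0) (form_pos Z hZ0 hZs hZr x hx)
    refine lt_of_lt_of_eq h ?_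
    rw [Finset.mul_sum]
    refine Finset.sum_congr rfl fun i _ => ?_
    simp only [mul_assoc, ← Finset.mul_sum, sub_mul, Finset.sum_sub_distrib, ite_mul, zero_mul,
      one_mul]
    rw [Finset.sum_ite_eq', if_pos (Finset.mem_univ _)]
    ring
  · intro l hl hlr i
    have hsq : √ρ ^ 2 = ρ := Real.sq_sqrt hρ0.le
    have hsp := Real.sqrt_pos.mpr hρ0
    have h := sq_eigen N Z hZ0 hZs hZr hZe (fun j => Evec l j) (l / √ρ) (by positivity)
      (by
        intro i
        rw [hsum, tri_eig_odd K l hlr i i.2, div_pow, hsq]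
        ring) i
    simp only [mul_assoc, ← Finset.mul_sum, sub_mul, Finset.sum_sub_distrib, ite_mul, zero_mul,
      one_mul]
    rw [Finset.sum_ite_eq', if_pos (Finset.mem_univ _), h]
    field_simp

/-! ### The two core arguments -/

lemma test_aux (K : ℕ) (F : ℝ[X]) (H : ∀ i, i ≤ K → LL (X ^ (2 * i + 1) * F) = 0) (i : ℕ) :
    ∀ j, i + j ≤ K → LL (X ^ (2 * j + 1) * (He (2 * i) * F)) = 0 ∧
      LL (X ^ (2 * j) * (He (2 * i + 1) * F)) = 0 := by
  induction i with
  | zero =>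
    intro j hj
    have := H j (by omega)
    refine ⟨by simpa [He] using this, ?_⟩
    rw [← this]
    congr 1
    simp [He]
    ring
  | succ i ih =>
    intro j hj
    have h1 : LL (X ^ (2 * j + 1) * (He (2 * (i + 1)) * F)) = 0 := by
      rw [show 2 * (i + 1) = 2 * i + 2 by ring, He_succ_succ,
        show X ^ (2 * j + 1) * ((X * He (2 * i + 1) - C (((2 * i : ℕ) : ℝ) + 1) * He (2 * i)) * F) =
          X ^ (2 * (j + 1)) * (He (2 * i + 1) * F) -
            C (((2 * i : ℕ) : ℝ) + 1) * (X ^ (2 * j + 1) * (He (2 * i) * F)) by ring,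
        map_sub, LL_C_mul, (ih (j + 1) (by omega)).2, (ih j (by omega)).1]
      simp
    refine ⟨h1, ?_⟩
    rw [show 2 * (i + 1) + 1 = (2 * i + 1) + 2 by ring, He_succ_succ,
      show X ^ (2 * j) * ((X * He (2 * i + 1 + 1) - C (((2 * i + 1 : ℕ) : ℝ) + 1) * He (2 * i + 1)) * F) =
          X ^ (2 * j + 1) * (He (2 * (i + 1)) * F) -
            C (((2 * i + 1 : ℕ) : ℝ) + 1) * (X ^ (2 * j) * (He (2 * i + 1) * F)) by
          rw [show 2 * (i + 1) = 2 * i + 1 + 1 by ring]; ring,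
      map_sub, LL_C_mul, h1, (ih j (by omega)).2]
    simp

lemma test_even (K : ℕ) (F : ℝ[X]) (H : ∀ i, i ≤ K → LL (X ^ (2 * i + 1) * F) = 0) (i : ℕ)
    (hi : i ≤ K) : LL (X * (He (2 * i) * F)) = 0 := by
  simpa using (test_aux K F H i 0 (by omega)).1

lemma test_odd (K : ℕ) (F : ℝ[X]) (H : ∀ i, i ≤ K → LL (X ^ (2 * i + 1) * F) = 0) (i : ℕ)
    (hi : i ≤ K) : LL (He (2 * i + 1) * F) = 0 := by
  simpa using (test_aux K F H i 0 (by omega)).2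

lemma LL_odd_odd (i j : ℕ) : LL (He (2 * i + 1) * He (2 * j + 1)) =
    if j = i then ((2 * i + 1).factorial : ℝ) * LL 1 else 0 := by
  split_ifs with h
  · subst h; exact LL_He_sq _
  · exact LL_odd_odd_ne i j (Ne.symm h)

/-- the coefficients `w = R̂₊ v` -/
noncomputable def wc {K : ℕ} (lam v : Fin K → ℝ) (l : ℕ) : ℝ :=
  ∑ k, v k * (Hhat l).eval (lam k) / ((l + 2).factorial : ℝ)

lemma wc_odd {K : ℕ} (lam v : Fin K → ℝ) (i : ℕ) :
    √((2 * i + 3).factorial : ℝ) * wc lam v (2 * i + 1) = (-1) ^ i * ∑ k, v k * Evec (lam k) i := by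
  unfold wc
  rw [Finset.mul_sum, Finset.mul_sum]
  refine Finset.sum_congr rfl fun k _ => ?_
  unfold Evec
  have h : ((2 * i + 3).factorial : ℝ) = √((2 * i + 3).factorial : ℝ) * √((2 * i + 3).factorial : ℝ) :=
    (Real.mul_self_sqrt (by positivity)).symm
  have h0 : √((2 * i + 3).factorial : ℝ) ≠ 0 := by positivity
  rw [show 2 * i + 1 + 2 = 2 * i + 3 by ring]
  have e : ((-1 : ℝ) ^ i) * (-1) ^ i = 1 := by rw [← mul_pow]; simp
  rw [show (-1 : ℝ) ^ i * (v k * ((-1) ^ i * eval (lam k) (Hhat (2 * i + 1)) / √((2 * i + 3).factorial : ℝ)))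
    = ((-1 : ℝ) ^ i * (-1) ^ i) * (v k * (eval (lam k) (Hhat (2 * i + 1)) / √((2 * i + 3).factorial : ℝ))) by ring, e]
  generalize √((2 * i + 3).factorial : ℝ) = r at h h0 ⊢
  rw [h]
  field_simp

set_option maxHeartbeats 2000000 in
lemma core_even (K : ℕ) (c : ℝ) (hc : 0 < c) (lam v : Fin K → ℝ) (hpos : ∀ k, 0 < lam k)
    (hinj : Function.Injective lam) (hroot : ∀ k, (Hhat (2 * K)).eval (lam k) = 0) (a : ℝ)
    (H : ∀ i, i ≤ K → LL (X ^ (2 * i + 1) *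
      (C a + ∑ i ∈ Finset.range K, C (wc lam v (2 * i)) * He (2 * i + 2) +
        C c * ∑ i ∈ Finset.range K, C (wc lam v (2 * i + 1)) * He (2 * i + 3))) = 0) :
    v = 0 := by
  set w := wc lam v with hw
  set Fe : ℝ[X] := C a + ∑ i ∈ Finset.range K, C (w (2 * i)) * He (2 * i + 2) with hFe
  set Fo : ℝ[X] := ∑ i ∈ Finset.range K, C (w (2 * i + 1)) * He (2 * i + 3) with hFo
  have h1 : LL (X * (Fe * (Fe + C c * Fo))) = 0 := by
    obtain ⟨F, hF⟩ : ∃ F : ℝ[X], F = Fe + C c * Fo := ⟨_, rfl⟩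
    rw [← hF] at H ⊢
    have e0 : X * (Fe * F) = C a * (X ^ (2 * 0 + 1) * F) +
        ∑ i ∈ Finset.range K, C (w (2 * i)) * (X * (He (2 * (i + 1)) * F)) := by
      rw [hFe, add_mul, mul_add, Finset.sum_mul, Finset.mul_sum]
      congr 1
      · ring
      · refine Finset.sum_congr rfl fun i _ => ?_
        rw [show 2 * (i + 1) = 2 * i + 2 by ring]; ring
    rw [e0, map_add, LL_C_mul, H 0 (by omega), mul_zero, zero_add, map_sum]
    refine Finset.sum_eq_zero fun i hi => ?_
    rw [LL_C_mul, test_even K _ H (i + 1) (by have := Finset.mem_range.mp hi; omega), mul_zero]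
  have h2 : ∀ j, j < K → LL (He (2 * j + 3) * (X * Fe)) =
      LL 1 * ∑ k, v k * lam k * (Hhat (2 * j + 1)).eval (lam k) := by
    intro j hj
    have e1 : He (2 * j + 3) * (X * Fe) = C a * (He (2 * (j + 1) + 1) * He (2 * 0 + 1)) +
        ∑ i ∈ Finset.range K, (C (w (2 * i)) * (He (2 * (j + 1) + 1) * He (2 * (i + 1) + 1)) +
          C (w (2 * i) * (2 * i + 2)) * (He (2 * (j + 1) + 1) * He (2 * i + 1))) := by
      rw [hFe, mul_add, mul_add, Finset.mul_sum, Finset.mul_sum]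
      congr 1
      · rw [show He (2 * 0 + 1) = X by simp [He], show 2 * (j + 1) + 1 = 2 * j + 3 by ring]
        ring
      · refine Finset.sum_congr rfl fun i _ => ?_
        have := X_mul_He (2 * i + 1)
        rw [show 2 * (i + 1) + 1 = 2 * i + 1 + 2 by ring, show 2 * (j + 1) + 1 = 2 * j + 3 by ring,
          show He (2 * j + 3) * (X * (C (w (2 * i)) * He (2 * i + 2))) =
            He (2 * j + 3) * C (w (2 * i)) * (X * He (2 * i + 1 + 1)) by ring, this]
        push_cast
        rw [show (2 * (i : ℝ) + 1 + 1) = 2 * i + 2 by ring, C_mul]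
        ring
    rw [e1, map_add, LL_C_mul, LL_odd_odd, if_neg (by omega), mul_zero, zero_add, map_sum]
    simp only [map_add, LL_C_mul, LL_odd_odd, Finset.sum_add_distrib]
    simp only [Nat.add_right_cancel_iff, mul_ite, mul_zero]
    rw [Finset.sum_ite_eq', Finset.sum_ite_eq', if_pos (Finset.mem_range.mpr hj)]
    have e2 : (if j + 1 ∈ Finset.range K then w (2 * (j + 1)) * (2 * ((j + 1 : ℕ) : ℝ) + 2) *
        (((2 * (j + 1) + 1).factorial : ℝ) * LL 1) else 0) =
        w (2 * (j + 1)) * (2 * ((j + 1 : ℕ) : ℝ) + 2) *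
        (((2 * (j + 1) + 1).factorial : ℝ) * LL 1) := by
      split_ifs with h
      · rfl
      · have hK : j + 1 = K := by
          rw [Finset.mem_range] at h; omega
        have : w (2 * (j + 1)) = 0 := by
          rw [hw, wc, hK]
          exact Finset.sum_eq_zero fun k _ => by rw [hroot k]; simp
        rw [this]; simp
    rw [e2, hw]
    unfold wc
    simp only [Finset.sum_mul, Finset.mul_sum]
    rw [← Finset.sum_add_distrib]
    refine Finset.sum_congr rfl fun k _ => ?_
    have hr := Hhat_rec (2 * j) (lam k)
    rw [show 2 * (j + 1) = 2 * j + 2 by ring, hr]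
    rw [show 2 * j + 2 + 2 = 2 * j + 2 + 1 + 1 by ring, Nat.factorial_succ (2 * j + 2 + 1),
      Nat.factorial_succ (2 * j + 2)]
    have hf : ((2 * j + 2).factorial : ℝ) ≠ 0 := by positivity
    have hf3 : (2 * (j : ℝ) + 2 + 1) ≠ 0 := by positivity
    have hf4 : (2 * (j : ℝ) + 2 + 1 + 1) ≠ 0 := by positivity
    push_cast
    field_simp
    ring
  have h3 : LL (X * (Fe * Fo)) = LL 1 * ∑ k, v k ^ 2 * lam k *
      ∑ i : Fin K, Evec (lam k) i * Evec (lam k) i := by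
    have e1 : X * (Fe * Fo) = ∑ j ∈ Finset.range K, C (w (2 * j + 1)) * (He (2 * j + 3) * (X * Fe)) := by
      rw [hFo, Finset.mul_sum, Finset.mul_sum]
      exact Finset.sum_congr rfl fun j _ => by ring
    rw [e1, map_sum]
    have e2 : ∀ j ∈ Finset.range K, LL (C (w (2 * j + 1)) * (He (2 * j + 3) * (X * Fe))) =
        LL 1 * ∑ k, ∑ k', v k * lam k * v k' * (Evec (lam k) j * Evec (lam k') j) := by
      intro j hj
      rw [LL_C_mul, h2 j (Finset.mem_range.mp hj)]
      have hw' := wc_odd lam v j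
      rw [← hw] at hw'
      have h0 : √((2 * j + 3).factorial : ℝ) ≠ 0 := by positivity
      have hP : ∀ k, (Hhat (2 * j + 1)).eval (lam k) =
          (-1) ^ j * (√((2 * j + 3).factorial : ℝ) * Evec (lam k) j) := by
        intro k
        unfold Evec
        have e : ((-1 : ℝ) ^ j) * (-1) ^ j = 1 := by rw [← mul_pow]; simp
        field_simp
        rw [pow_two, e, mul_one]
      have e : ((-1 : ℝ) ^ j) * (-1) ^ j = 1 := by rw [← mul_pow]; simp
      simp only [hP]
      rw [show w (2 * j + 1) * (LL 1 * ∑ k, v k * lam k * ((-1) ^ j *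
          (√((2 * j + 3).factorial : ℝ) * Evec (lam k) j)))
        = LL 1 * ((∑ k, v k * lam k * Evec (lam k) j) *
          ((-1) ^ j * (√((2 * j + 3).factorial : ℝ) * w (2 * j + 1)))) by
          rw [show ∑ k, v k * lam k * ((-1) ^ j * (√((2 * j + 3).factorial : ℝ) * Evec (lam k) j)) =
            (∑ k, v k * lam k * Evec (lam k) j) * ((-1) ^ j * √((2 * j + 3).factorial : ℝ)) by
              rw [Finset.sum_mul]; exact Finset.sum_congr rfl fun k _ => by ring]
          ring, hw', ← mul_assoc ((-1 : ℝ) ^ j), e, one_mul, Finset.sum_mul_sum]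
      congr 1
      refine Finset.sum_congr rfl fun k _ => Finset.sum_congr rfl fun k' _ => by ring
    rw [Finset.sum_congr rfl e2, ← Finset.mul_sum, Finset.sum_comm]
    congr 1
    refine Finset.sum_congr rfl fun k _ => ?_
    rw [Finset.sum_comm, Finset.sum_eq_single k]
    · rw [Fin.sum_univ_eq_sum_range (fun j => Evec (lam k) j * Evec (lam k) j) K, Finset.mul_sum]
      exact Finset.sum_congr rfl fun j _ => by ring
    · intro k' _ hne
      rw [← Finset.mul_sum, ← Fin.sum_univ_eq_sum_range (fun j => Evec (lam k) j * Evec (lam k') j) K,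
        Evec_orth K _ _ (hpos k) (hpos k') (fun h => hne (hinj h).symm) (Or.inr ⟨hroot k, hroot k'⟩),
        mul_zero]
    · intro h; exact absurd (Finset.mem_univ k) h
  have h4 := LL_X_sq_nonneg Fe
  rw [show X * (Fe * (Fe + C c * Fo)) = X * (Fe * Fe) + C c * (X * (Fe * Fo)) by ring, map_add,
    LL_C_mul, h3] at h1
  funext k
  have hK : 0 < K := lt_of_le_of_lt (Nat.zero_le _) k.2
  have hnn : ∀ k, 0 ≤ v k ^ 2 * lam k * ∑ i : Fin K, Evec (lam k) i * Evec (lam k) i := fun k =>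
    mul_nonneg (mul_nonneg (sq_nonneg _) (hpos k).le) (Evec_norm_pos K hK _ (hpos k)).le
  have hs : ∑ k, v k ^ 2 * lam k * ∑ i : Fin K, Evec (lam k) i * Evec (lam k) i = 0 := by
    have h5 := Finset.sum_nonneg fun k (_ : k ∈ Finset.univ) => hnn k
    by_contra hne
    have h6 := mul_pos hc (mul_pos LL_one_pos (lt_of_le_of_ne h5 (Ne.symm hne)))
    linarith
  have h7 := (Finset.sum_eq_zero_iff_of_nonneg fun k _ => hnn k).mp hs k (Finset.mem_univ k)
  have h8 := (Evec_norm_pos K hK _ (hpos k)).ne'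
  have h9 := (hpos k).ne'
  simpa [h8, h9] using h7

/-- coefficients of the even part divided by `X`, in the odd case -/
noncomputable def sc {K : ℕ} (lam v : Fin K → ℝ) (i : ℕ) : ℝ :=
  ∑ k, v k * (Hhat (2 * i + 1)).eval (lam k) / (lam k * ((2 * i + 3).factorial : ℝ))

noncomputable def xc {K : ℕ} (lam v : Fin K → ℝ) (i : ℕ) : ℝ :=
  ∑ k, v k / lam k * Evec (lam k) i

lemma wc_even_zero {K : ℕ} (lam v : Fin K → ℝ) (hpos : ∀ k, 0 < lam k) :
    wc lam v 0 = 3 * sc lam v 0 := by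
  unfold wc sc
  rw [Finset.mul_sum]
  refine Finset.sum_congr rfl fun k _ => ?_
  have := (hpos k).ne'
  simp [Hhat, Nat.factorial]
  field_simp
  ring

lemma wc_even_succ {K : ℕ} (lam v : Fin K → ℝ) (hpos : ∀ k, 0 < lam k) (i : ℕ) :
    wc lam v (2 * (i + 1)) = (2 * i + 5) * sc lam v (i + 1) + sc lam v i := by
  unfold wc sc
  rw [Finset.mul_sum, ← Finset.sum_add_distrib]
  refine Finset.sum_congr rfl fun k _ => ?_
  have := (hpos k).ne'
  have hr := Hhat_rec (2 * i + 1) (lam k)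
  rw [show 2 * (i + 1) + 1 = 2 * i + 1 + 2 by ring, hr,
    show 2 * (i + 1) = 2 * i + 1 + 1 by ring, show 2 * i + 1 + 1 + 3 = 2 * i + 3 + 1 + 1 by ring,
    show 2 * i + 1 + 1 + 2 = 2 * i + 3 + 1 by ring, Nat.factorial_succ (2 * i + 3 + 1),
    Nat.factorial_succ (2 * i + 3)]
  have hf : ((2 * i + 3).factorial : ℝ) ≠ 0 := by positivity
  have h4 : (2 * (i : ℝ) + 3 + 1) ≠ 0 := by positivity
  have h5 : (2 * (i : ℝ) + 3 + 1 + 1) ≠ 0 := by positivity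
  push_cast
  field_simp
  ring

lemma even_part {K : ℕ} (lam v : Fin K → ℝ) (hpos : ∀ k, 0 < lam k) (n : ℕ) :
    ∑ i ∈ Finset.range (n + 1), C (wc lam v (2 * i)) * He (2 * i + 2) =
      X * ∑ i ∈ Finset.range n, C (sc lam v i) * He (2 * i + 3) +
        C ((2 * n + 3) * sc lam v n) * He (2 * n + 2) := by
  induction n with
  | zero => simp [wc_even_zero lam v hpos]
  | succ n ih =>
    rw [Finset.sum_range_succ, ih, Finset.sum_range_succ, wc_even_succ lam v hpos, mul_add X,
      show X * (C (sc lam v n) * He (2 * n + 3)) = C (sc lam v n) * (X * He (2 * n + 2 + 1)) by ring,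
      X_mul_He, show 2 * (n + 1) + 2 = 2 * n + 2 + 2 by ring]
    push_cast
    simp only [C_add, C_mul]
    have e : (C (2 : ℝ) : ℝ[X]) = 2 := rfl
    have e3 : (C (3 : ℝ) : ℝ[X]) = 3 := rfl
    have e5 : (C (5 : ℝ) : ℝ[X]) = 5 := rfl
    have e1 : (C (1 : ℝ) : ℝ[X]) = 1 := rfl
    rw [e, e3, e5, e1]
    ring

lemma sc_eq {K : ℕ} (lam v : Fin K → ℝ) (i : ℕ) :
    sc lam v i = (-1) ^ i * xc lam v i / √((2 * i + 3).factorial : ℝ) := by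
  unfold sc xc Evec
  rw [Finset.mul_sum, Finset.sum_div]
  refine Finset.sum_congr rfl fun k _ => ?_
  have h : ((2 * i + 3).factorial : ℝ) = √((2 * i + 3).factorial : ℝ) * √((2 * i + 3).factorial : ℝ) :=
    (Real.mul_self_sqrt (by positivity)).symm
  have h0 : √((2 * i + 3).factorial : ℝ) ≠ 0 := by positivity
  have e : ((-1 : ℝ) ^ i) * (-1) ^ i = 1 := by rw [← mul_pow]; simp
  generalize √((2 * i + 3).factorial : ℝ) = r at h h0 ⊢
  rw [h, show (-1) ^ i * (v k / lam k * ((-1) ^ i * eval (lam k) (Hhat (2 * i + 1)) / r)) / r =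
    ((-1 : ℝ) ^ i * (-1) ^ i) * (v k * eval (lam k) (Hhat (2 * i + 1)) / (lam k * (r * r))) by
      field_simp, e, one_mul]

lemma row_odd {K : ℕ} (c : ℝ) (lam v : Fin K → ℝ) (hpos : ∀ k, 0 < lam k)
    (hroot : ∀ k, (Hhat (2 * K + 1)).eval (lam k) = 0) (a : ℝ)
    (H : ∀ i, i ≤ K → LL (X ^ (2 * i + 1) *
      (C a + ∑ i ∈ Finset.range (K + 1), C (wc lam v (2 * i)) * He (2 * i + 2) +
        C c * ∑ i ∈ Finset.range K, C (wc lam v (2 * i + 1)) * He (2 * i + 3))) = 0)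
    (j : ℕ) (hj : j ≤ K) :
    a * (He (2 * j)).eval 0 +
      ∑ i ∈ Finset.range K, sc lam v i * LL (X * (He (2 * j + 1) * He (2 * (i + 1) + 1))) +
      c * ∑ i ∈ Finset.range K, wc lam v (2 * i + 1) *
        LL (He (2 * j + 1) * He (2 * (i + 1) + 1)) = 0 := by
  have h := test_odd K _ H j hj
  have hs : sc lam v K = 0 := Finset.sum_eq_zero fun k _ => by rw [hroot k]; simp
  rw [even_part lam v hpos, hs, mul_zero, C_0, zero_mul, add_zero] at h
  refine Eq.trans ?_ h
  rw [← LL_He_odd, mul_add, mul_add, map_add, map_add]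
  congr 1
  · congr 1
    · rw [mul_comm (He _), LL_C_mul]
    · rw [Finset.mul_sum, Finset.mul_sum, map_sum]
      refine Finset.sum_congr rfl fun i _ => ?_
      rw [← LL_C_mul, show 2 * (i + 1) + 1 = 2 * i + 3 by ring]
      generalize He (2 * j + 1) = p
      generalize He (2 * i + 3) = q
      refine congrArg LL ?_
      ring
  · rw [show ∀ p q : ℝ[X], p * (C c * q) = C c * (p * q) from fun p q => by ring, LL_C_mul]
    congr 1
    rw [Finset.mul_sum, map_sum]
    refine Finset.sum_congr rfl fun i _ => ?_
    rw [← LL_C_mul, show 2 * (i + 1) + 1 = 2 * i + 3 by ring]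
    generalize He (2 * j + 1) = p
    generalize He (2 * i + 3) = q
    refine congrArg LL ?_
    ring

lemma sgn_sq (i : ℕ) : ((-1 : ℝ) ^ i) * (-1) ^ i = 1 := by rw [← mul_pow]; simp

/-- entries of the first part of the matrix -/
noncomputable def Gm (j i : ℕ) : ℝ :=
  (-1) ^ j * (-1) ^ i * LL (X * (He (2 * (j + 1) + 1) * He (2 * (i + 1) + 1))) /
    (√((2 * j + 3).factorial : ℝ) * √((2 * i + 3).factorial : ℝ))

lemma Gm_off (j i : ℕ) (h : j ≠ i) : Gm j i ≤ 0 := by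
  have h1 := LL_X_odd_odd_sign (j + 1) (i + 1) (by omega)
  unfold Gm
  apply div_nonpos_of_nonpos_of_nonneg _ (by positivity)
  rw [pow_succ, pow_succ] at h1
  linarith

lemma Gm_form (K : ℕ) (y : Fin K → ℝ) : 0 ≤ ∑ j, y j * ∑ i : Fin K, Gm j i * y i := by
  have h := LL_X_sq_nonneg (∑ i : Fin K, C ((-1) ^ (i : ℕ) * y i / √((2 * (i : ℕ) + 3).factorial : ℝ)) *
    He (2 * ((i : ℕ) + 1) + 1))
  refine h.trans_eq ?_
  rw [Finset.sum_mul_sum, Finset.mul_sum, map_sum]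
  refine Finset.sum_congr rfl fun j _ => ?_
  rw [Finset.mul_sum, Finset.mul_sum, map_sum]
  refine Finset.sum_congr rfl fun i _ => ?_
  rw [show ∀ (s t : ℝ) (p q : ℝ[X]), X * (C s * p * (C t * q)) = C (s * t) * (X * (p * q)) from
    fun s t p q => by rw [C_mul]; ring, LL_C_mul]
  unfold Gm
  have h1 : √((2 * (j : ℕ) + 3).factorial : ℝ) ≠ 0 := by positivity
  have h2 : √((2 * (i : ℕ) + 3).factorial : ℝ) ≠ 0 := by positivity
  field_simp

lemma core_odd (K : ℕ) (c : ℝ) (hc : 0 < c) (lam v : Fin K → ℝ) (hpos : ∀ k, 0 < lam k)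
    (hinj : Function.Injective lam) (hroot : ∀ k, (Hhat (2 * K + 1)).eval (lam k) = 0) (a : ℝ)
    (H : ∀ i, i ≤ K → LL (X ^ (2 * i + 1) *
      (C a + ∑ i ∈ Finset.range (K + 1), C (wc lam v (2 * i)) * He (2 * i + 2) +
        C c * ∑ i ∈ Finset.range K, C (wc lam v (2 * i + 1)) * He (2 * i + 3))) = 0) :
    v = 0 := by
  have hrow := row_odd c lam v hpos hroot a H
  obtain ⟨Y, hY1, hY2, hY3⟩ := exists_root K
  have hγ := LL_one_pos
  have hYx : ∀ j : Fin K, ∑ i, Y j i * xc lam v i = ∑ k, v k * Evec (lam k) j := by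
    intro j
    unfold xc
    simp only [Finset.mul_sum]
    rw [Finset.sum_comm]
    refine Finset.sum_congr rfl fun k _ => ?_
    have := (hpos k).ne'
    rw [show ∑ i : Fin K, Y j i * (v k / lam k * Evec (lam k) i) =
      v k / lam k * ∑ i : Fin K, Y j i * Evec (lam k) i by
        rw [Finset.mul_sum]; exact Finset.sum_congr rfl fun i _ => by ring, hY3 _ (hpos k) (hroot k)]
    field_simp
  have key := M_matrix_key (fun j i : Fin K => Gm j i + c * LL 1 * Y j i) ?_ ?_
    (fun i => xc lam v i) a
    (fun j => (-1) ^ ((j : ℕ) + 1) * (He (2 * ((j : ℕ) + 1))).eval 0 / √((2 * (j : ℕ) + 3).factorial : ℝ))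
    (fun i => (-1) ^ (i : ℕ) * LL (X * (He (2 * 0 + 1) * He (2 * ((i : ℕ) + 1) + 1))) /
      √((2 * (i : ℕ) + 3).factorial : ℝ)) ?_ ?_ ?_ ?_
  · obtain ⟨ha, hx⟩ := key
    funext k
    have hK : 0 < K := lt_of_le_of_lt (Nat.zero_le _) k.2
    have h0 : ∑ i : Fin K, xc lam v i * Evec (lam k) i = 0 :=
      Finset.sum_eq_zero fun i _ => by rw [show xc lam v i = 0 from congrFun hx i, zero_mul]
    have h1 : ∑ i : Fin K, xc lam v i * Evec (lam k) i =
        v k / lam k * ∑ i : Fin K, Evec (lam k) i * Evec (lam k) i := by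
      unfold xc
      simp only [Finset.sum_mul]
      rw [Finset.sum_comm, Finset.sum_eq_single k]
      · rw [Finset.mul_sum]
        exact Finset.sum_congr rfl fun i _ => by ring
      · intro k' _ hne
        rw [show ∑ i : Fin K, v k' / lam k' * Evec (lam k') i * Evec (lam k) i =
          v k' / lam k' * ∑ i : Fin K, Evec (lam k') i * Evec (lam k) i by
            rw [Finset.mul_sum]; exact Finset.sum_congr rfl fun i _ => by ring,
          Evec_orth K _ _ (hpos k') (hpos k) (fun h => hne (hinj h)) (Or.inl ⟨hroot k', hroot k⟩),
          mul_zero]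
      · intro h; exact absurd (Finset.mem_univ k) h
    rw [h0] at h1
    have h8 := (Evec_norm_pos K hK _ (hpos k)).ne'
    have h9 := (hpos k).ne'
    rcases mul_eq_zero.mp h1.symm with h | h
    · rcases div_eq_zero_iff.mp h with h | h
      · exact h
      · exact absurd h h9
    · exact absurd h h8
  · intro i j hij
    have h1 := Gm_off i j (fun h => hij (Fin.ext h))
    have h2 := mul_nonpos_of_nonneg_of_nonpos (mul_pos hc hγ).le (hY1 i j hij)
    linarith
  · intro y hy
    have h1 := Gm_form K y
    have h2 := mul_pos (mul_pos hc hγ) (hY2 y hy)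
    have e : ∑ i : Fin K, y i * ∑ j : Fin K, (Gm i j + c * LL 1 * Y i j) * y j =
        ∑ j, y j * ∑ i : Fin K, Gm j i * y i + c * LL 1 * ∑ i, y i * ∑ j, Y i j * y j := by
      rw [Finset.mul_sum, ← Finset.sum_add_distrib]
      refine Finset.sum_congr rfl fun i _ => ?_
      simp only [add_mul, Finset.sum_add_distrib, mul_assoc, ← Finset.mul_sum]
      ring
    rw [e]
    linarith
  · intro j
    have := He_even_sign ((j : ℕ) + 1)
    positivity
  · intro i
    have := LL_X_odd_odd_sign 0 ((i : ℕ) + 1) (by omega)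
    apply div_nonneg _ (by positivity)
    rw [pow_succ] at this
    linarith
  · intro j
    have h := hrow (j + 1) j.2
    rw [show ∑ i ∈ Finset.range K, wc lam v (2 * i + 1) *
        LL (He (2 * ((j : ℕ) + 1) + 1) * He (2 * (i + 1) + 1)) =
        wc lam v (2 * (j : ℕ) + 1) * (((2 * (j : ℕ) + 3).factorial : ℝ) * LL 1) by
      simp only [LL_odd_odd, Nat.add_right_cancel_iff, mul_ite, mul_zero]
      rw [Finset.sum_ite_eq', if_pos (Finset.mem_range.mpr j.2)]
      rfl] at h
    have hw := wc_odd lam v j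
    rw [← hYx] at hw
    have h0 : √((2 * (j : ℕ) + 3).factorial : ℝ) ≠ 0 := by positivity
    have hf : ((2 * (j : ℕ) + 3).factorial : ℝ) =
      √((2 * (j : ℕ) + 3).factorial : ℝ) * √((2 * (j : ℕ) + 3).factorial : ℝ) :=
      (Real.mul_self_sqrt (by positivity)).symm
    have hsum : ∑ i ∈ Finset.range K, sc lam v i *
        LL (X * (He (2 * ((j : ℕ) + 1) + 1) * He (2 * (i + 1) + 1))) =
        (-1) ^ (j : ℕ) * √((2 * (j : ℕ) + 3).factorial : ℝ) * ∑ i : Fin K, Gm j i * xc lam v i := by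
      rw [← Fin.sum_univ_eq_sum_range (fun i => sc lam v i *
        LL (X * (He (2 * ((j : ℕ) + 1) + 1) * He (2 * (i + 1) + 1)))), Finset.mul_sum]
      refine Finset.sum_congr rfl fun i _ => ?_
      have h2 : √((2 * (i : ℕ) + 3).factorial : ℝ) ≠ 0 := by positivity
      rw [sc_eq]
      unfold Gm
      have e := sgn_sq j
      generalize LL (X * (He (2 * ((j : ℕ) + 1) + 1) * He (2 * ((i : ℕ) + 1) + 1))) = g
      generalize √((2 * (i : ℕ) + 3).factorial : ℝ) = r at *
      generalize √((2 * (j : ℕ) + 3).factorial : ℝ) = r' at *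
      rw [show (-1) ^ (j : ℕ) * r' * ((-1) ^ (j : ℕ) * (-1) ^ (i : ℕ) * g / (r' * r) * xc lam v ↑i) =
        ((-1 : ℝ) ^ (j : ℕ) * (-1) ^ (j : ℕ)) * ((-1) ^ (i : ℕ) * g / r * xc lam v ↑i) by field_simp,
        e, one_mul]
      ring
    rw [hsum] at h
    simp only [add_mul, Finset.sum_add_distrib, mul_assoc, ← Finset.mul_sum]
    generalize ∑ i : Fin K, Gm j i * xc lam v i = S1 at *
    generalize ∑ i : Fin K, Y j i * xc lam v i = S2 at *
    generalize wc lam v (2 * (j : ℕ) + 1) = w at *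
    generalize eval 0 (He (2 * ((j : ℕ) + 1))) = z at *
    generalize √((2 * (j : ℕ) + 3).factorial : ℝ) = r at *
    rw [hf] at h
    have e := sgn_sq j
    rw [pow_succ]
    generalize ((-1 : ℝ) ^ (j : ℕ)) = s at *
    field_simp
    have hs : r * S1 * s * s + c * LL 1 * r * (s * s) * S2 = - (a * z) * s := by
      have : a * z + s * r * S1 + c * (r * (r * w) * LL 1) = 0 := by linarith
      rw [hw] at this
      linear_combination s * this
    linear_combination hs - (r * S1 + c * LL 1 * r * S2) * e
  · have h := hrow 0 (Nat.zero_le _)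
    rw [show ∑ i ∈ Finset.range K, wc lam v (2 * i + 1) *
        LL (He (2 * 0 + 1) * He (2 * (i + 1) + 1)) = 0 from
      Finset.sum_eq_zero fun i _ => by rw [LL_odd_odd, if_neg (by omega), mul_zero], mul_zero c,
      add_zero, ← Fin.sum_univ_eq_sum_range (fun i => sc lam v i *
        LL (X * (He (2 * 0 + 1) * He (2 * (i + 1) + 1))))] at h
    refine Eq.trans ?_ h
    congr 1
    · simp [He]
    · refine Finset.sum_congr rfl fun i _ => ?_
      rw [sc_eq]
      ring

/-! ### Positivity of the first half of the roots -/

lemma Hhat_parity (x : ℝ) (n : ℕ) :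
    (Hhat n).eval (-x) = (-1) ^ n * (Hhat n).eval x ∧
      (Hhat (n + 1)).eval (-x) = (-1) ^ (n + 1) * (Hhat (n + 1)).eval x := by
  induction n with
  | zero => simp [Hhat]
  | succ n ih =>
    refine ⟨ih.2, ?_⟩
    rw [show n + 1 + 1 = n + 2 by ring, Hhat_rec, Hhat_rec, ih.1, ih.2]
    ring

lemma Hhat_deg (n : ℕ) :
    ((Hhat n).natDegree ≤ n ∧ (Hhat n).coeff n = 1) ∧
      ((Hhat (n + 1)).natDegree ≤ n + 1 ∧ (Hhat (n + 1)).coeff (n + 1) = 1) := by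
  induction n with
  | zero => simp [Hhat]
  | succ n ih =>
    refine ⟨ih.2, ?_⟩
    obtain ⟨⟨h1, h2⟩, h3, h4⟩ := ih
    have e : Hhat (n + 1 + 1) = X * Hhat (n + 1) - C ((n : ℝ) + 3) * Hhat n := by rw [Hhat]
    rw [e]
    constructor
    · refine (natDegree_sub_le _ _).trans (max_le ?_ ?_)
      · refine natDegree_mul_le.trans ?_
        have := natDegree_X_le (R := ℝ)
        omega
      · exact (natDegree_C_mul_le _ _).trans (by omega)
    · rw [coeff_sub, coeff_X_mul, h4, coeff_C_mul, coeff_eq_zero_of_natDegree_lt (by omega)]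
      simp

lemma Hhat_roots (n : ℕ) (f : Fin n → ℝ) (hf : Function.Injective f)
    (hr : ∀ j, (Hhat n).eval (f j) = 0) :
    Set.range f = {x | (Hhat n).eval x = 0} := by
  have hd := (Hhat_deg n).1
  have h0 : Hhat n ≠ 0 := by
    intro h
    have := hd.2
    rw [h] at this
    simp at this
  have h1 : Finset.univ.image f = (Hhat n).roots.toFinset := by
    apply Finset.eq_of_subset_of_card_le
    · intro x hx
      obtain ⟨j, _, rfl⟩ := Finset.mem_image.mp hx
      rw [Multiset.mem_toFinset, mem_roots h0]
      exact hr j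
    · rw [Finset.card_image_of_injective _ hf, Finset.card_univ, Fintype.card_fin]
      exact (Multiset.toFinset_card_le _).trans ((card_roots' _).trans hd.1)
  ext x
  have := congrArg (fun s : Finset ℝ => x ∈ s) h1
  simp only [Finset.mem_image, Finset.mem_univ, true_and, Multiset.mem_toFinset, mem_roots h0] at this
  exact Iff.of_eq this

lemma lam_pos (n : ℕ) (lam : Fin n → ℝ) (hroot : ∀ j, (Hhat n).eval (lam j) = 0)
    (hdesc : ∀ i j : Fin n, i < j → lam j < lam i) (k : Fin n) (hk : 2 * (k : ℕ) + 1 < n) :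
    0 < lam k := by
  have hf : StrictMono (fun j => lam (Fin.rev j)) := fun i j hij =>
    hdesc _ _ (Fin.rev_lt_rev.mpr hij)
  have hg : StrictMono (fun j => -lam j) := fun i j hij => neg_lt_neg (hdesc _ _ hij)
  have h1 := Hhat_roots n _ hf.injective (fun j => hroot _)
  have h2 := Hhat_roots n _ hg.injective
    (fun j => by rw [(Hhat_parity (lam j) n).1, hroot j, mul_zero])
  have h3 := (StrictMono.range_inj hf hg).mp (h1.trans h2.symm)
  have h4 := congrFun h3 k
  have h5 := hdesc k (Fin.rev k) (by rw [Fin.lt_def, Fin.val_rev]; omega)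
  linarith

/-! ### Assembling -/

lemma sum_even_odd (K : ℕ) (g : ℕ → ℝ[X]) :
    ∑ l ∈ Finset.range (2 * K), g l =
      ∑ i ∈ Finset.range K, g (2 * i) + ∑ i ∈ Finset.range K, g (2 * i + 1) := by
  induction K with
  | zero => simp
  | succ K ih =>
    rw [show 2 * (K + 1) = 2 * K + 1 + 1 by ring, Finset.sum_range_succ, Finset.sum_range_succ, ih,
      Finset.sum_range_succ, Finset.sum_range_succ]
    abel

lemma sum_fin_split (N K : ℕ) (hN : N = K + 1) (f : Fin N → ℝ) :
    ∑ j, f j = f ⟨0, by omega⟩ + ∑ k : Fin K, f ⟨(k : ℕ) + 1, by have := k.2; omega⟩ := by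
  subst hN
  rw [Fin.sum_univ_succ]
  rfl

lemma row_eq (n K i : ℕ) (hn : 0 < n) (χ : ℝ) (lam v : Fin K → ℝ) (u0 : ℝ)
    (h : u0 * ((Nat.doubleFactorial (2 * i) : ℝ) / Real.sqrt (2 * Real.pi)) +
      ∑ k, v k * ∑ l : Fin n, (Sχ χ (2 * i + 1) ((l : ℕ) + 2) -
        2 * ((Nat.doubleFactorial (2 * i) : ℝ) / Real.sqrt (2 * Real.pi)) *
          (if (l : ℕ) = 0 then 1 else 0)) *
        ((Hhat (l : ℕ)).eval (lam k) / (Nat.factorial ((l : ℕ) + 2) : ℝ)) = 0) :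
    LL (X ^ (2 * i + 1) * (C (u0 - 2 * wc lam v 0) +
      ∑ l ∈ Finset.range n, C (chiHat χ (l + 2) * wc lam v l) * He (l + 2))) = 0 := by
  have hs : √(2 * π) ≠ 0 := by positivity
  have e1 : ∑ k, v k * ∑ l : Fin n, (Sχ χ (2 * i + 1) ((l : ℕ) + 2) -
        2 * ((Nat.doubleFactorial (2 * i) : ℝ) / Real.sqrt (2 * Real.pi)) *
          (if (l : ℕ) = 0 then 1 else 0)) *
        ((Hhat (l : ℕ)).eval (lam k) / (Nat.factorial ((l : ℕ) + 2) : ℝ)) =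
      ∑ l ∈ Finset.range n, (Sχ χ (2 * i + 1) (l + 2) -
        2 * ((Nat.doubleFactorial (2 * i) : ℝ) / Real.sqrt (2 * Real.pi)) *
          (if l = 0 then 1 else 0)) * wc lam v l := by
    rw [← Fin.sum_univ_eq_sum_range (fun l => (Sχ χ (2 * i + 1) (l + 2) -
        2 * ((Nat.doubleFactorial (2 * i) : ℝ) / Real.sqrt (2 * Real.pi)) *
          (if l = 0 then 1 else 0)) * wc lam v l)]
    unfold wc
    simp only [Finset.mul_sum]
    rw [Finset.sum_comm]
    refine Finset.sum_congr rfl fun l _ => Finset.sum_congr rfl fun k _ => ?_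
    ring
  have e2 : ∑ l ∈ Finset.range n, (Sχ χ (2 * i + 1) (l + 2) -
        2 * ((Nat.doubleFactorial (2 * i) : ℝ) / Real.sqrt (2 * Real.pi)) *
          (if l = 0 then 1 else 0)) * wc lam v l =
      (∑ l ∈ Finset.range n, chiHat χ (l + 2) * wc lam v l * LL (X ^ (2 * i + 1) * He (l + 2))) /
        √(2 * π) - 2 * ((Nat.doubleFactorial (2 * i) : ℝ) / √(2 * π)) * wc lam v 0 := by
    simp only [sub_mul, Finset.sum_sub_distrib, mul_ite, ite_mul, mul_one, mul_zero, zero_mul]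
    rw [Finset.sum_ite_eq', if_pos (Finset.mem_range.mpr hn), Finset.sum_div]
    congr 1
    refine Finset.sum_congr rfl fun l _ => ?_
    rw [Sχ, Sstar_eq]
    ring
  have e3 : LL (X ^ (2 * i + 1) * (C (u0 - 2 * wc lam v 0) +
      ∑ l ∈ Finset.range n, C (chiHat χ (l + 2) * wc lam v l) * He (l + 2))) =
      (u0 - 2 * wc lam v 0) * (Nat.doubleFactorial (2 * i) : ℝ) +
      ∑ l ∈ Finset.range n, chiHat χ (l + 2) * wc lam v l * LL (X ^ (2 * i + 1) * He (l + 2)) := by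
    rw [mul_add, map_add, mul_comm _ (C _), LL_C_mul, LL_X_odd, Finset.mul_sum, map_sum]
    congr 1
    refine Finset.sum_congr rfl fun l _ => ?_
    rw [← LL_C_mul]
    generalize He (l + 2) = p
    refine congrArg LL ?_
    ring
  rw [e1, e2] at h
  rw [e3]
  generalize ∑ l ∈ Finset.range n, chiHat χ (l + 2) * wc lam v l * LL (X ^ (2 * i + 1) * He (l + 2)) = T at *
  field_simp at h
  linarith

lemma chiHat_even (χ : ℝ) (i : ℕ) : chiHat χ (2 * i + 2) = 1 := by
  unfold chiHat
  rw [if_pos ⟨i + 1, by ring⟩]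

lemma chiHat_odd (χ : ℝ) (i : ℕ) : chiHat χ (2 * i + 1 + 2) = (2 - χ) / χ := by
  unfold chiHat
  rw [if_neg]
  rw [Nat.not_even_iff_odd]
  exact ⟨i + 1, by ring⟩

lemma split_even (K : ℕ) (χ : ℝ) (w : ℕ → ℝ) :
    ∑ l ∈ Finset.range (2 * K), C (chiHat χ (l + 2) * w l) * He (l + 2) =
      ∑ i ∈ Finset.range K, C (w (2 * i)) * He (2 * i + 2) +
        C ((2 - χ) / χ) * ∑ i ∈ Finset.range K, C (w (2 * i + 1)) * He (2 * i + 3) := by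
  rw [sum_even_odd]
  simp only [chiHat_even, chiHat_odd, one_mul, C_mul, Finset.mul_sum, mul_assoc]

lemma split_odd (K : ℕ) (χ : ℝ) (w : ℕ → ℝ) :
    ∑ l ∈ Finset.range (2 * K + 1), C (chiHat χ (l + 2) * w l) * He (l + 2) =
      ∑ i ∈ Finset.range (K + 1), C (w (2 * i)) * He (2 * i + 2) +
        C ((2 - χ) / χ) * ∑ i ∈ Finset.range K, C (w (2 * i + 1)) * He (2 * i + 3) := by
  rw [Finset.sum_range_succ, split_even, chiHat_even, one_mul, Finset.sum_range_succ]
  abel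

lemma core (n K : ℕ) (hn : n = 2 * K ∨ n = 2 * K + 1) (χ : ℝ) (hχ : 0 < (2 - χ) / χ)
    (lam v : Fin K → ℝ) (hpos : ∀ k, 0 < lam k) (hinj : Function.Injective lam)
    (hroot : ∀ k, (Hhat n).eval (lam k) = 0) (u0 : ℝ)
    (H : ∀ i, i ≤ K → LL (X ^ (2 * i + 1) * (C (u0 - 2 * wc lam v 0) +
      ∑ l ∈ Finset.range n, C (chiHat χ (l + 2) * wc lam v l) * He (l + 2))) = 0) :
    u0 = 0 ∧ v = 0 := by
  have hv : v = 0 := by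
    rcases hn with rfl | rfl
    · simp only [split_even, ← add_assoc] at H
      exact core_even K _ hχ lam v hpos hinj hroot _ H
    · simp only [split_odd, ← add_assoc] at H
      exact core_odd K _ hχ lam v hpos hinj hroot _ H
  refine ⟨?_, hv⟩
  have hw : ∀ l, wc lam v l = 0 := fun l => Finset.sum_eq_zero fun k _ => by rw [hv]; simp
  have h0 := H 0 (Nat.zero_le _)
  simp only [hw, mul_zero, C_0, zero_mul, Finset.sum_const_zero, add_zero, sub_zero] at h0
  rw [mul_comm, LL_C_mul, show (X : ℝ[X]) ^ (0 + 1) = X ^ (2 * 0 + 1) by rfl, LL_X_odd] at h0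
  simpa using h0

/-- Unique solvability of the boundary-condition system: for M ≥ 3 and an
    algebraic accommodation coefficient χ ∈ (0,1], the matrix
    A = ( h , (S − 2 h e₁ᵀ)·R̂₊ ) has nonzero determinant.  Here (1-based)
    hᵢ = (2i−2)!!/√(2π), Sᵢⱼ = S(2i−1, j+1), R̂ᵢⱼ = Ĥe_{i−1}(λ̂ⱼ)/(i+1)! with
    λ̂₁ > ⋯ > λ̂_{M−2} the roots of Ĥe_{M−2}, and R̂₊ its first ⌊M/2⌋−1
    columns. -/
theorem boundary_matrix_nonsingular (M : ℕ) (hM : 3 ≤ M)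
    (χ : ℝ) (hχ0 : 0 < χ) (hχ1 : χ ≤ 1) (hχalg : IsAlgebraic ℚ χ)
    (lam : Fin (M - 2) → ℝ)
    (hroot : ∀ j, (Hhat (M - 2)).eval (lam j) = 0)
    (hdesc : ∀ i j : Fin (M - 2), i < j → lam j < lam i) :
    (Matrix.of fun i j : Fin (M / 2) =>
        if hj : (j : ℕ) = 0 then
          (Nat.doubleFactorial (2 * (i : ℕ)) : ℝ) / Real.sqrt (2 * Real.pi)
        else
          ((Matrix.of fun (i' : Fin (M / 2)) (j' : Fin (M - 2)) =>
              Sχ χ (2 * (i' : ℕ) + 1) ((j' : ℕ) + 2) -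
                2 * ((Nat.doubleFactorial (2 * (i' : ℕ)) : ℝ) /
                      Real.sqrt (2 * Real.pi)) *
                  (if (j' : ℕ) = 0 then 1 else 0)) *
            (Matrix.of fun (i' : Fin (M - 2)) (j' : Fin (M / 2 - 1)) =>
              (Hhat (i' : ℕ)).eval (lam (Fin.castLE (by omega) j')) /
                (Nat.factorial ((i' : ℕ) + 2) : ℝ)))
            i ⟨(j : ℕ) - 1, by have := j.isLt; omega⟩).det ≠ 0 := by
  intro hdet
  obtain ⟨u, hu0, hu⟩ := Matrix.exists_mulVec_eq_zero_iff.mpr hdet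
  have hN : M / 2 = (M / 2 - 1) + 1 := by omega
  have hc : 0 < (2 - χ) / χ := div_pos (by linarith) hχ0
  have hmain := core (M - 2) (M / 2 - 1) (by omega) χ hc
    (fun k => lam (Fin.castLE (by omega) k))
    (fun k => u ⟨(k : ℕ) + 1, by have := k.2; omega⟩)
    (fun k => lam_pos (M - 2) lam hroot hdesc _ (by
      have := k.2
      simp only [Fin.val_castLE]
      omega))
    (by
      have hinj : Function.Injective lam := by
        intro i j hij
        rcases lt_trichotomy i j with h | h | h
        · exact absurd hij (hdesc _ _ h).ne'
        · exact h
        · exact absurd hij (hdesc _ _ h).ne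
      intro a b hab
      have := hinj hab
      rw [Fin.ext_iff] at this ⊢
      exact this)
    (fun k => hroot _) (u ⟨0, by omega⟩) (by
      intro i hi
      refine row_eq (M - 2) (M / 2 - 1) i (by omega) χ _ _ _ ?_
      have hrow := congrFun hu ⟨i, by omega⟩
      rw [Matrix.mulVec, dotProduct, sum_fin_split _ _ hN] at hrow
      refine Eq.trans ?_ hrow
      congr 1
      · rw [mul_comm]
        rfl
      · refine Finset.sum_congr rfl fun k _ => ?_
        rw [mul_comm]
        rfl)
  apply hu0
  funext j
  by_cases hj : (j : ℕ) = 0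
  · have : j = ⟨0, by omega⟩ := Fin.ext hj
    rw [this]
    exact hmain.1
  · have h := congrFun hmain.2 ⟨(j : ℕ) - 1, by have := j.2; omega⟩
    have e : j = ⟨(j : ℕ) - 1 + 1, by have := j.2; omega⟩ := Fin.ext (by simp only; omega)
    rw [e]
    exact h
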